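/- Let k ≥ 2 and let G be a graph on n vertices, with ex-many edges for C_{2k+1} (i.e., G is C_{2k+1}-free with e(G) = ex(n;C_{2k+1})). Then G is connected, and for every 2-connected block B of G on m vertices, the induced subgraph on B has exactly ex(m; C_{2k+1}) edges. -/

import Mathlib

open SimpleGraph

/-!
Both halves are exchange arguments: an extremal graph cannot be changed into another
`C_{2k+1}`-free graph on the same vertex set with more edges.

*Connectedness.* Joining two vertices in different components adds a bridge, which lies on no
cycle, so the enlarged graph is still `C_{2k+1}`-free.

*Blocks.* Let `s` be a block. Any path of `G` between two distinct vertices of `s` stays in `s`,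
since otherwise `s` together with that path would be a larger 2-connected set
(`IsBlock.support_subset`). Hence, once the edges inside `s` are deleted, no two distinct vertices
of `s` are joined by a walk. If `G[s]` had fewer than `ex(|s|)` edges, it could be replaced by a
`C_{2k+1}`-free graph `H` on `s` with more edges. In the resulting graph a cycle through two
vertices of `s` splits there into two paths, each of which stays in `s`, so it is a cycle of `H`;
any other cycle avoids the edges inside `s` and is a cycle of `G` (`IsBlock.not_containsCycleLength_replace`).
So the new graph is `C_{2k+1}`-free and has too many edges.
-/

/-- `G` contains a cycle of length `L` as a subgraph, i.e. a copy of `C_L`. -/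
def ContainsCycleLength {V : Type*} (G : SimpleGraph V) (L : ℕ) : Prop :=
  ∃ (v : V) (w : G.Walk v v), w.IsCycle ∧ w.length = L

/-- The number of edges of a graph. -/
noncomputable def edgeCount {V : Type*} (G : SimpleGraph V) : ℕ :=
  G.edgeSet.ncard

/-- The Turán number `ex(n; C_{2k+1})`: the maximum number of edges of a simple graph on
`n` vertices containing no cycle of length `2k+1`. -/
noncomputable def exC (n k : ℕ) : ℕ :=
  sSup {m | ∃ G : SimpleGraph (Fin n), ¬ ContainsCycleLength G (2 * k + 1) ∧ edgeCount G = m}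


/-- A graph is 2-connected if it has at least 3 vertices and deleting any single vertex
leaves a connected graph. -/
def IsTwoConnected {V : Type*} (G : SimpleGraph V) : Prop :=
  3 ≤ Nat.card V ∧ ∀ v : V, (G.induce ({v}ᶜ : Set V)).Connected

/-- A vertex set inducing a 2-connected subgraph or a single edge. -/
def IsBlockSet {V : Type*} (G : SimpleGraph V) (s : Set V) : Prop :=
  IsTwoConnected (G.induce s) ∨ ∃ a b, G.Adj a b ∧ s = {a, b}

/-- A block of `G`: a maximal vertex set inducing a 2-connected subgraph or an edge. -/
def IsBlock {V : Type*} (G : SimpleGraph V) (s : Set V) : Prop :=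
  IsBlockSet G s ∧ ∀ t : Set V, IsBlockSet G t → s ⊆ t → s = t

/-- A cactus (block graph): a connected graph all of whose blocks are complete graphs. -/
def IsCactus {V : Type*} (G : SimpleGraph V) : Prop :=
  G.Connected ∧ ∀ s : Set V, IsBlock G s → s.Pairwise G.Adj

/-! ### Cycle lengths and the Turán number -/

theorem ContainsCycleLength.map {V W : Type*} {G : SimpleGraph V} {H : SimpleGraph W} {L : ℕ}
    (h : ContainsCycleLength G L) (f : G →g H) (hf : Function.Injective f) :
    ContainsCycleLength H L := by
  obtain ⟨v, w, hw, hl⟩ := h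
  exact ⟨f v, w.map f, hw.map hf, by simpa using hl⟩

theorem not_containsCycleLength_bot {V : Type*} (L : ℕ) :
    ¬ ContainsCycleLength (⊥ : SimpleGraph V) L := by
  rintro ⟨v, w, hw, -⟩
  cases w with
  | nil => exact hw.ne_nil rfl
  | cons h _ => exact h

theorem edgeCount_iso {V W : Type*} {G : SimpleGraph V} {H : SimpleGraph W} (e : G ≃g H) :
    edgeCount G = edgeCount H := by
  rw [edgeCount, edgeCount, ← Nat.card_coe_set_eq, ← Nat.card_coe_set_eq]
  exact Nat.card_congr e.mapEdgeSet

theorem bddAbove_edgeCount (n k : ℕ) :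
    BddAbove {m | ∃ G : SimpleGraph (Fin n),
      ¬ ContainsCycleLength G (2 * k + 1) ∧ edgeCount G = m} := by
  refine ⟨Nat.card (Sym2 (Fin n)), ?_⟩
  rintro _ ⟨G, -, rfl⟩
  exact Set.ncard_le_card _

theorem edgeCount_le_exC {V : Type*} [Finite V] {G : SimpleGraph V} {k n : ℕ}
    (hn : Nat.card V = n) (h : ¬ ContainsCycleLength G (2 * k + 1)) : edgeCount G ≤ exC n k := by
  have e : V ≃ Fin n := Finite.equivFinOfCardEq hn
  let i : G ≃g G.map e.toEmbedding := Iso.map e G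
  rw [edgeCount_iso i]
  exact le_csSup (bddAbove_edgeCount n k)
    ⟨_, fun h' => h (h'.map i.symm.toHom i.symm.injective), rfl⟩

theorem exists_edgeCount_eq_exC (V : Type*) [Finite V] (k : ℕ) :
    ∃ H : SimpleGraph V, ¬ ContainsCycleLength H (2 * k + 1) ∧ edgeCount H = exC (Nat.card V) k := by
  obtain ⟨H, hH, he⟩ := Nat.sSup_mem (s := {m | ∃ G : SimpleGraph (Fin (Nat.card V)),
      ¬ ContainsCycleLength G (2 * k + 1) ∧ edgeCount G = m})
      ⟨_, ⊥, not_containsCycleLength_bot _, rfl⟩ (bddAbove_edgeCount _ k)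
  let i : H ≃g H.map (Finite.equivFin V).symm.toEmbedding := Iso.map (Finite.equivFin V).symm H
  exact ⟨_, fun h' => hH (h'.map i.symm.toHom i.symm.injective), (edgeCount_iso i).symm.trans he⟩

/-! ### Connectivity of block sets -/

theorem isTwoConnected_induce_iff {V : Type*} {G : SimpleGraph V} {s : Set V} :
    IsTwoConnected (G.induce s) ↔ 3 ≤ s.ncard ∧ ∀ v ∈ s, (G.induce (s \ {v})).Connected := by
  have key (v : s) : ((G.induce s).induce ({v}ᶜ : Set s)).Connected ↔
      (G.induce (s \ {v.1})).Connected := by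
    refine Iso.connected_iff ⟨⟨fun x => ⟨x.1.1, x.1.2, fun h => x.2 (Subtype.ext h)⟩,
      fun x => ⟨⟨x.1, x.2.1⟩, fun h => x.2.2 (congrArg Subtype.val h)⟩,
      fun _ => rfl, fun _ => rfl⟩, ?_⟩
    exact Iff.rfl
  rw [IsTwoConnected, Nat.card_coe_set_eq]
  simp only [key, Subtype.forall]

/-- Deleting one vertex, which need not lie in `s`, from a block set leaves a connected graph. -/
theorem IsBlockSet.connected_diff {V : Type*} {G : SimpleGraph V} {s : Set V}
    (hs : IsBlockSet G s) (w : V) : (G.induce (s \ {w})).Connected := by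
  rcases hs with hs | ⟨a, b, hab, rfl⟩
  · rw [isTwoConnected_induce_iff] at hs
    obtain ⟨h3, hs⟩ := hs
    by_cases hw : w ∈ s
    · exact hs w hw
    · obtain ⟨a, b, c, ha, hb, hc, hab, hac, hbc⟩ := (Set.two_lt_ncard_iff
        (Set.finite_of_ncard_pos (by omega))).1 (show 2 < s.ncard by omega)
      have := induce_union_connected (hs a ha).preconnected (hs b hb).preconnected
        ⟨c, ⟨hc, hac.symm⟩, ⟨hc, hbc.symm⟩⟩
      have hu : s \ {a} ∪ s \ {b} = s \ {w} := by
        ext x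
        simp only [Set.mem_union, Set.mem_sdiff, Set.mem_singleton_iff]
        grind
      rwa [hu] at this
  · have single (x : V) : (G.induce {x}).Connected := by
      have : Subsingleton ({x} : Set V) := inferInstance
      exact ⟨.of_subsingleton⟩
    by_cases ha : w = a
    · have : ({a, b} : Set V) \ {w} = {b} := by
        ext x; have := hab.ne; simp; grind
      rw [this]; exact single b
    by_cases hb : w = b
    · have : ({a, b} : Set V) \ {w} = {a} := by
        ext x; have := hab.ne; simp; grind
      rw [this]; exact single a
    · have : ({a, b} : Set V) \ {w} = {a, b} := by
        ext x; simp; grind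
      rw [this]; exact induce_pair_connected_of_adj hab

/-- Adding to a block set a path that joins two of its vertices and leaves the set gives a 2-connected
set (the vertex outside ensures that there are at least three vertices): after the
deletion of a vertex `w`, each other vertex of the path is still joined to one of its ends. -/
theorem IsBlockSet.union_support {V : Type*} [Finite V] {G : SimpleGraph V} {s : Set V}
    (hs : IsBlockSet G s) {u v : V} (hu : u ∈ s) (hv : v ∈ s) (huv : u ≠ v)
    (p : G.Walk u v) (hp : p.IsPath) (hps : ¬ ∀ x ∈ p.support, x ∈ s) :
    IsBlockSet G (s ∪ {x | x ∈ p.support}) := by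
  classical
  left
  rw [isTwoConnected_induce_iff]
  constructor
  · push Not at hps
    obtain ⟨x, hx, hxs⟩ := hps
    exact (Set.two_lt_ncard_iff (Set.toFinite _)).2 ⟨u, v, x, Or.inl hu, Or.inl hv, Or.inr hx, huv,
      fun h => hxs (h ▸ hu), fun h => hxs (h ▸ hv)⟩
  · intro w _
    have hc := hs.connected_diff w
    obtain ⟨⟨b, hb⟩⟩ := hc.nonempty
    refine induce_connected_of_patches b ⟨Or.inl hb.1, hb.2⟩ ?_
    rintro x ⟨hx, hxw⟩
    have patch : ∀ z ∈ s, ∀ q : G.Walk z x, (∀ y ∈ q.support, y ∈ p.support) → w ∉ q.support →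
        ∃ s' ⊆ (s ∪ {x | x ∈ p.support}) \ {w}, ∃ (hu' : b ∈ s') (hv' : x ∈ s'),
          (G.induce s').Reachable ⟨b, hu'⟩ ⟨x, hv'⟩ := by
      intro z hz q hq hwq
      refine ⟨s \ {w} ∪ {y | y ∈ q.support}, ?_, Or.inl hb, Or.inr q.end_mem_support, ?_⟩
      · rintro y (hy | hy)
        · exact ⟨Or.inl hy.1, hy.2⟩
        · exact ⟨Or.inr (hq y hy), fun h => hwq (h ▸ hy)⟩
      · refine (induce_union_connected hc.preconnected
          q.connected_induce_support.preconnected ?_).preconnected _ _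
        exact ⟨z, ⟨hz, fun h => hwq (h ▸ q.start_mem_support)⟩, q.start_mem_support⟩
    rcases hx with hx | hx
    · exact ⟨s \ {w}, fun y hy => ⟨Or.inl hy.1, hy.2⟩, hb, ⟨hx, hxw⟩, hc.preconnected _ _⟩
    · have hx' : x ∈ p.support := hx
      by_cases h1 : w ∈ (p.takeUntil x hx').support
      · refine patch v hv (p.dropUntil x hx').reverse ?_ ?_
        · intro y hy
          exact p.support_dropUntil_subset_support hx' (by simpa using hy)
        · intro h2
          have h2' : w ∈ (p.dropUntil x hx').support := by simpa using h2
          have hp' := hp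
          rw [← p.take_spec hx'] at hp'
          exact hp'.ne_of_mem_support_of_append (fun h => hxw h.symm) h1 h2' rfl
      · exact patch u hu (p.takeUntil x hx')
          (fun y hy => p.support_takeUntil_subset_support hx' hy) h1

theorem IsBlock.support_subset {V : Type*} [Finite V] {G : SimpleGraph V} {s : Set V}
    (hs : IsBlock G s) {u v : V} (hu : u ∈ s) (hv : v ∈ s) (huv : u ≠ v)
    (p : G.Walk u v) (hp : p.IsPath) : ∀ x ∈ p.support, x ∈ s := by
  by_contra hps
  have := hs.2 _ (hs.1.union_support hu hv huv p hp hps) Set.subset_union_left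
  exact hps fun x hx => this ▸ Or.inr hx

/-! ### Replacing the graph inside a block -/

/-- The graph `G` with all edges inside `s` removed. -/
def outside {V : Type*} (G : SimpleGraph V) (s : Set V) : SimpleGraph V where
  Adj x y := G.Adj x y ∧ ¬ (x ∈ s ∧ y ∈ s)
  symm := ⟨fun _ _ h => ⟨h.1.symm, fun h' => h.2 h'.symm⟩⟩
  loopless := ⟨fun _ h => h.1.ne rfl⟩

theorem outside_le {V : Type*} (G : SimpleGraph V) (s : Set V) : outside G s ≤ G :=
  fun _ _ h => h.1

theorem IsBlock.eq_of_reachable_outside {V : Type*} [Finite V] {G : SimpleGraph V} {s : Set V}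
    (hs : IsBlock G s) {u v : V} (hu : u ∈ s) (hv : v ∈ s)
    (h : (outside G s).Reachable u v) : u = v := by
  by_contra huv
  obtain ⟨p, hp⟩ := h.exists_isPath
  have hsub := hs.support_subset hu hv huv (p.mapLe (outside_le G s)) (hp.mapLe _)
  cases p with
  | nil => exact huv rfl
  | cons h q =>
    refine h.2 ⟨hu, hsub _ ?_⟩
    simp

/-- The graph on `V` with the edges of `H` inside `s` and those of `G` elsewhere. -/
def replace {V : Type*} (G : SimpleGraph V) (s : Set V) (H : SimpleGraph s) : SimpleGraph V :=
  outside G s ⊔ H.map (Function.Embedding.subtype (· ∈ s))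

theorem replace_adj_cases {V : Type*} {G : SimpleGraph V} {s : Set V} {H : SimpleGraph s} {x y : V}
    (h : (replace G s H).Adj x y) : (outside G s).Adj x y ∨ (x ∈ s ∧ y ∈ s) := by
  rcases h with h | h
  · exact Or.inl h
  · obtain ⟨a, b, -, rfl, rfl⟩ := (map_adj _ _ _ _).1 h
    exact Or.inr ⟨a.2, b.2⟩

theorem induce_replace {V : Type*} (G : SimpleGraph V) (s : Set V) (H : SimpleGraph s) :
    (replace G s H).induce s = H := by
  ext x y
  constructor
  · rintro (h | h)
    · exact absurd ⟨x.2, y.2⟩ h.2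
    · obtain ⟨a, b, hab, ha, hb⟩ := (map_adj _ _ _ _).1 h
      obtain rfl : a = x := Subtype.ext ha
      obtain rfl : b = y := Subtype.ext hb
      exact hab
  · exact fun h => Or.inr ((map_adj _ _ _ _).2 ⟨x, y, h, rfl, rfl⟩)

theorem replace_induce {V : Type*} (G : SimpleGraph V) (s : Set V) :
    replace G s (G.induce s) = G := by
  ext x y
  constructor
  · rintro (h | h)
    · exact h.1
    · obtain ⟨a, b, hab, rfl, rfl⟩ := (map_adj _ _ _ _).1 h
      exact hab
  · intro h
    by_cases hs : x ∈ s ∧ y ∈ s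
    · exact Or.inr ((map_adj _ _ _ _).2 ⟨⟨x, hs.1⟩, ⟨y, hs.2⟩, h, rfl, rfl⟩)
    · exact Or.inl ⟨h, hs⟩

theorem edgeCount_replace {V : Type*} [Finite V] (G : SimpleGraph V) (s : Set V)
    (H : SimpleGraph s) :
    edgeCount (replace G s H) = edgeCount (outside G s) + edgeCount H := by
  rw [edgeCount, replace, edgeSet_sup, Set.ncard_union_eq ?_ (Set.toFinite _) (Set.toFinite _),
    SimpleGraph.edgeSet_map]
  · congr 1
    exact Set.ncard_image_of_injective _ (Function.Embedding.injective _)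
  · rw [Set.disjoint_left]
    intro e
    induction e with
    | h x y =>
      intro h1 h2
      obtain ⟨a, b, -, rfl, rfl⟩ := (map_adj _ _ _ _).1 h2
      exact h1.2 ⟨a.2, b.2⟩

/-- A walk ending in `s` reaches `s` for the first time using only edges not inside `s`. -/
theorem exists_reachable_outside {V : Type*} {G : SimpleGraph V} {s : Set V} {H : SimpleGraph s}
    {x v : V} (p : (replace G s H).Walk x v) (hv : v ∈ s) :
    ∃ w ∈ s, w ∈ p.support ∧ (outside G s).Reachable x w := by
  induction p with
  | nil => exact ⟨_, hv, by simp, .rfl⟩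
  | cons h q ih =>
    rcases replace_adj_cases h with h' | h'
    · obtain ⟨w, hw, hwq, hr⟩ := ih hv
      exact ⟨w, hw, by simp [hwq], h'.reachable.trans hr⟩
    · exact ⟨_, h'.1, by simp, .rfl⟩

theorem IsBlock.support_subset_replace {V : Type*} [Finite V] {G : SimpleGraph V} {s : Set V}
    (hs : IsBlock G s) {H : SimpleGraph s} {u v : V} (p : (replace G s H).Walk u v)
    (hp : p.IsPath) (hu : u ∈ s) (hv : v ∈ s) : ∀ x ∈ p.support, x ∈ s := by
  induction p with
  | nil => simpa using hu
  | @cons a b c h q ih =>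
    rw [Walk.cons_isPath_iff] at hp
    have hb : b ∈ s := by
      -- if the first edge left `s`, the path would return to `s` only at its starting vertex `a`
      rcases replace_adj_cases h with hout | hin
      · obtain ⟨w, hw, hwq, hr⟩ := exists_reachable_outside q hv
        exact absurd (hs.eq_of_reachable_outside hu hw (hout.reachable.trans hr) ▸ hwq) hp.2
      · exact hin.2
    intro x hx
    rw [Walk.support_cons, List.mem_cons] at hx
    rcases hx with rfl | hx
    · exact hu
    · exact ih hp.1 hb hv x hx

theorem IsBlock.not_containsCycleLength_replace {V : Type*} [Finite V] {G : SimpleGraph V}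
    {s : Set V} (hs : IsBlock G s) {H : SimpleGraph s} {L : ℕ} (hG : ¬ ContainsCycleLength G L)
    (hH : ¬ ContainsCycleLength H L) : ¬ ContainsCycleLength (replace G s H) L := by
  classical
  rintro ⟨v, c, hc, hl⟩
  by_cases h : ∃ a ∈ c.support, ∃ b ∈ c.support, a ∈ s ∧ b ∈ s ∧ a ≠ b
  · obtain ⟨a, hac, b, hbc, ha, hb, hab⟩ := h
    have hc' := hc.rotate hac
    have hl' : (c.rotate a hac).length = L := by rw [Walk.length_rotate, hl]
    have hb' : b ∈ (c.rotate a hac).support := (Walk.mem_support_rotate_iff ..).2 hbc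
    generalize c.rotate a hac = d at hc' hl' hb'
    have hdrop : (d.dropUntil b hb').IsPath := by
      have h' := hc'
      rw [← d.take_spec hb'] at h'
      exact h'.isPath_of_append_right (Walk.not_nil_of_ne hab)
    have hd : ∀ x ∈ d.support, x ∈ s := by
      intro x hx
      rw [← d.take_spec hb', Walk.mem_support_append_iff] at hx
      rcases hx with hx | hx
      · exact hs.support_subset_replace _ (hc'.isPath_takeUntil hb') ha hb x hx
      · exact hs.support_subset_replace _ hdrop hb ha x hx
    apply hH
    rw [← induce_replace G s H]
    have hm : (d.induce s hd).map (Embedding.induce _).toHom = d := d.map_induce hd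
    refine ⟨_, d.induce s hd, ?_, ?_⟩
    · apply Walk.IsCycle.of_map (f := (Embedding.induce s).toHom)
      rw [hm]; exact hc'
    · exact ((Walk.length_map _ _).symm.trans (congrArg Walk.length hm)).trans hl'
  · push Not at h
    refine hG ⟨v, c.transfer G ?_, hc.transfer _, (Walk.length_transfer ..).trans hl⟩
    intro e he
    induction e with
    | h x y =>
      have hadj : (replace G s H).Adj x y := c.edges_subset_edgeSet he
      rcases replace_adj_cases hadj with h' | h'
      · exact h'.1
      · exact absurd (h x (c.fst_mem_support_of_mem_edges he) y
          (c.snd_mem_support_of_mem_edges he) h'.1 h'.2) hadj.ne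

/-! ### Joining components -/

theorem not_containsCycleLength_sup_edge {V : Type*} {G : SimpleGraph V} {u v : V}
    (huv : ¬ G.Reachable u v) {L : ℕ} (hG : ¬ ContainsCycleLength G L) :
    ¬ ContainsCycleLength (G ⊔ edge u v) L := by
  rintro ⟨x, c, hc, hl⟩
  have hbr : (G ⊔ edge u v).IsBridge s(u, v) := isBridge_sup_edge.2 (.of_not_reachable huv)
  refine hG ⟨x, c.transfer G ?_, hc.transfer _, (Walk.length_transfer ..).trans hl⟩
  intro e he
  have hmem := c.edges_subset_edgeSet he
  rw [edgeSet_sup] at hmem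
  rcases hmem with h | h
  · exact h
  · have : e = s(u, v) := by
      have := edgeSet_edge_subset h
      simpa using this
    exact absurd (this ▸ he) (hbr.notMem_edges_of_isCycle hc)

theorem edgeCount_lt_sup_edge {V : Type*} [Finite V] {G : SimpleGraph V} {u v : V}
    (huv : ¬ G.Reachable u v) : edgeCount G < edgeCount (G ⊔ edge u v) := by
  have hne : u ≠ v := fun h => huv (h ▸ .rfl)
  refine Set.ncard_lt_ncard (edgeSet_strict_mono ?_) (Set.toFinite _)
  refine lt_of_le_of_ne le_sup_left fun h => huv ?_
  have : (G ⊔ edge u v).Adj u v := Or.inr (by simp [edge_adj, hne])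
  exact (h ▸ this : G.Adj u v).reachable

/-- For `k ≥ 2`, every extremal `C_{2k+1}`-free graph `G` on `n ≥ 1` vertices is connected,
and every block of `G` on `m` vertices induces a subgraph with exactly `ex(m; C_{2k+1})`
edges. -/
theorem extremal_connected_blocks (k n : ℕ) (hk : 2 ≤ k) (hn : 1 ≤ n)
    (G : SimpleGraph (Fin n)) (hfree : ¬ ContainsCycleLength G (2 * k + 1))
    (hext : edgeCount G = exC n k) :
    G.Connected ∧
    ∀ s : Set (Fin n), IsBlock G s → edgeCount (G.induce s) = exC s.ncard k := by
  constructor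
  · have : Nonempty (Fin n) := ⟨⟨0, hn⟩⟩
    refine ⟨fun u v => ?_⟩
    by_contra huv
    have h1 := edgeCount_lt_sup_edge huv
    have h2 := edgeCount_le_exC (Nat.card_fin n) (not_containsCycleLength_sup_edge huv hfree)
    omega
  · intro s hs
    apply le_antisymm
    · exact edgeCount_le_exC (Nat.card_coe_set_eq s) fun h => hfree
        (h.map (Embedding.induce (G := G) s).toHom Subtype.val_injective)
    · obtain ⟨H, hH, he⟩ := exists_edgeCount_eq_exC s k
      rw [Nat.card_coe_set_eq] at he
      have h1 := edgeCount_le_exC (Nat.card_fin n) (hs.not_containsCycleLength_replace hfree hH)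
      have h2 := edgeCount_replace G s (G.induce s)
      rw [edgeCount_replace] at h1
      rw [replace_induce] at h2
      omega
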